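/- Let a : ℝ → ℝ be a C^∞, 2π-periodic, real-valued function. Then Z₁(a) = (2/3)·∑_{n=2}^∞ (n³ − n)·|â(n)|², where the series on the right converges. -/

import Mathlib

open MeasureTheory Real

noncomputable section

/-- The `k`-th Fourier coefficient of a `2π`-periodic function `u : ℝ → ℂ`:
`û(k) = (1/2π) ∫₀^{2π} u(θ) e^{-ikθ} dθ`. -/
def fCoef (u : ℝ → ℂ) (k : ℤ) : ℂ :=
  (2 * Real.pi)⁻¹ * ∫ θ in (0:ℝ)..(2 * Real.pi), u θ * Complex.exp (-Complex.I * k * θ)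

/-- `prodPoly m j n = n(n+j₁)(n+j₁+j₂)⋯(n+j₁+⋯+j_{m-1})`. -/
def prodPoly (m : ℕ) (j : Fin m → ℤ) (n : ℤ) : ℤ :=
  ∏ i : Fin m, (n + ∑ l ∈ Finset.Iio i, j l)

/-- The coefficient `N_{j₁…j_m} = ∑ₙ (|n(n+j₁)⋯(n+j₁+⋯+j_{m-1})| - n(n+j₁)⋯(n+j₁+⋯+j_{m-1}))`;
only finitely many summands are nonzero. -/
def Ncoef (m : ℕ) (j : Fin m → ℤ) : ℝ :=
  ∑' n : ℤ, ((|prodPoly m j n| - prodPoly m j n : ℤ) : ℝ)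

/-- A term of the series defining the zeta-invariant `Z_k(a)`:
`N_{j₁…j_{2k}} â(j₁)⋯â(j_{2k})` for `j₁+⋯+j_{2k} = 0`. -/
def zetaTerm (k : ℕ) (a : ℝ → ℝ) (j : {j : Fin (2 * k) → ℤ // ∑ i, j i = 0}) : ℂ :=
  (Ncoef (2 * k) j.val : ℂ) * ∏ i, fCoef (fun θ => (a θ : ℂ)) (j.val i)

/-- The zeta-invariant `Z_k(a) = ∑_{j₁+⋯+j_{2k}=0} N_{j₁…j_{2k}} â(j₁)⋯â(j_{2k})`. -/
def ZetaInv (k : ℕ) (a : ℝ → ℝ) : ℂ :=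
  ∑' j : {j : Fin (2 * k) → ℤ // ∑ i, j i = 0}, zetaTerm k a j


lemma fCoef_deriv (u : ℝ → ℂ) (hu : ContDiff ℝ (⊤ : ℕ∞) u)
    (hp : Function.Periodic u (2 * Real.pi)) (k : ℤ) :
    fCoef (deriv u) k = Complex.I * k * fCoef u k := by
  have hd : ∀ x ∈ Set.uIcc (0:ℝ) (2 * Real.pi),
      HasDerivAt (fun θ : ℝ => Complex.exp (-Complex.I * k * θ))
        (Complex.exp (-Complex.I * k * x) * (-Complex.I * k)) x := by
    intro x _
    have h1 : HasDerivAt (fun θ : ℝ => (-Complex.I * k * θ : ℂ)) (-Complex.I * k) x := by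
      simpa using (Complex.ofRealCLM.hasDerivAt (x := x)).const_mul (-Complex.I * (k:ℂ))
    exact h1.cexp
  have hud : ∀ x ∈ Set.uIcc (0:ℝ) (2 * Real.pi), HasDerivAt u (deriv u x) x := by
    intro x _
    exact (hu.differentiable (by simp)).differentiableAt.hasDerivAt
  have hcd : Continuous (deriv u) := hu.continuous_deriv (by simp)
  have key := intervalIntegral.integral_mul_deriv_eq_deriv_mul hud hd
    (hcd.intervalIntegrable _ _) (Continuous.intervalIntegrable (by fun_prop) _ _)
  have e1 : Complex.exp (-Complex.I * k * ((2 * Real.pi : ℝ) : ℂ)) = 1 := by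
    rw [Complex.exp_eq_one_iff]
    refine ⟨-k, ?_⟩
    push_cast; ring
  have e2 : u (2 * Real.pi) = u 0 := by simpa using hp 0
  rw [e1, e2] at key
  have e3 : (∫ x in (0:ℝ)..(2 * Real.pi), u x * (Complex.exp (-Complex.I * k * x) * (-Complex.I * k)))
      = (-Complex.I * k) * ∫ x in (0:ℝ)..(2 * Real.pi), u x * Complex.exp (-Complex.I * k * x) := by
    rw [← intervalIntegral.integral_const_mul]
    congr 1; ext x; ring
  rw [e3] at key
  unfold fCoef
  simp only [Complex.ofReal_zero, mul_zero, Complex.exp_zero] at key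
  linear_combination ((((2 * Real.pi)⁻¹ : ℝ) : ℂ)) * key

lemma fCoef_bound (u : ℝ → ℂ) (k : ℤ) :
    ‖fCoef u k‖ ≤ (2 * Real.pi)⁻¹ * ∫ θ in (0:ℝ)..(2 * Real.pi), ‖u θ‖ := by
  unfold fCoef
  rw [norm_mul]
  have h0 : ‖(((2 * Real.pi)⁻¹ : ℝ) : ℂ)‖ = (2 * Real.pi)⁻¹ := by
    rw [Complex.norm_real, Real.norm_of_nonneg (by positivity)]
  have : ‖∫ θ in (0:ℝ)..(2 * Real.pi), u θ * Complex.exp (-Complex.I * k * θ)‖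
      ≤ ∫ θ in (0:ℝ)..(2 * Real.pi), ‖u θ‖ := by
    refine (intervalIntegral.norm_integral_le_integral_norm (by positivity)).trans (le_of_eq ?_)
    congr 1; ext x
    have : ‖Complex.exp (-Complex.I * k * x)‖ = 1 := by
      rw [Complex.norm_exp]; simp
    rw [norm_mul, this, mul_one]
  rw [h0]
  gcongr

lemma fCoef_decay (p : ℕ) : ∀ (u : ℝ → ℂ), ContDiff ℝ (⊤ : ℕ∞) u →
    Function.Periodic u (2 * Real.pi) → ∃ C : ℝ, ∀ k : ℤ, |(k:ℝ)| ^ p * ‖fCoef u k‖ ≤ C := by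
  induction p with
  | zero => exact fun u _ _ => ⟨_, fun k => by simpa using fCoef_bound u k⟩
  | succ p ih =>
    intro u hu hp
    have h1 : ContDiff ℝ (⊤ : ℕ∞) (deriv u) := (contDiff_infty_iff_deriv.1 hu).2
    have h2 : Function.Periodic (deriv u) (2 * Real.pi) := by
      intro x
      rw [← deriv_comp_add_const]
      congr 1
      ext y; exact hp y
    obtain ⟨C, hC⟩ := ih _ h1 h2
    refine ⟨C, fun k => ?_⟩
    have := hC k
    rw [fCoef_deriv u hu hp k, norm_mul, norm_mul, Complex.norm_I, one_mul,
      Complex.norm_intCast] at this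
    rw [pow_succ, mul_assoc]; exact this

lemma fCoef_neg (a : ℝ → ℝ) (k : ℤ) :
    fCoef (fun θ => (a θ : ℂ)) (-k) = (starRingEnd ℂ) (fCoef (fun θ => (a θ : ℂ)) k) := by
  unfold fCoef
  rw [map_mul, Complex.conj_ofReal, intervalIntegral.intervalIntegral_eq_integral_uIoc, intervalIntegral.intervalIntegral_eq_integral_uIoc,
    if_pos (by positivity), one_smul, one_smul, ← integral_conj]
  congr 2
  ext x
  rw [map_mul, Complex.conj_ofReal, ← Complex.exp_conj]
  simp

lemma sum_aux (J : ℝ) (K : ℕ) : ∑ m ∈ Finset.range K, 2 * (m:ℝ) * (J - m)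
    = J * K * (K - 1) - (K - 1) * K * (2 * K - 1) / 3 := by
  induction K with
  | zero => simp
  | succ K ih => rw [Finset.sum_range_succ, ih]; push_cast; ring

lemma tsum_natJ (J : ℕ) : ∑' n : ℤ, ((|n * (n + J)| - n * (n + J) : ℤ) : ℝ) = ((J:ℝ) ^ 3 - J) / 3 := by
  rw [tsum_eq_sum (s := (Finset.range J).image (fun m : ℕ => -(m:ℤ)))]
  · rw [Finset.sum_image (by intro x _ y _ h; simpa using h)]
    have : ∀ m ∈ Finset.range J, (((|-(m:ℤ) * (-(m:ℤ) + J)| - -(m:ℤ) * (-(m:ℤ) + J) : ℤ)) : ℝ)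
        = 2 * (m:ℝ) * (J - m) := by
      intro m hm
      have hm' : (m:ℤ) < J := by exact_mod_cast Finset.mem_range.1 hm
      rw [abs_of_nonpos (by nlinarith [Int.natCast_nonneg m])]
      push_cast; ring
    rw [Finset.sum_congr rfl this, sum_aux]
    ring
  · intro n hn
    have : 0 ≤ n * (n + J) := by
      by_cases h : 0 ≤ n
      · positivity
      · have : n + J ≤ 0 := by
          by_contra h2
          apply hn
          rw [Finset.mem_image]
          refine ⟨n.natAbs, ?_, ?_⟩
          · rw [Finset.mem_range]; omega
          · omega
        nlinarith
    rw [abs_of_nonneg this]; simp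

lemma tsum_negJ (J : ℕ) : ∑' n : ℤ, ((|n * (n + -J)| - n * (n + -J) : ℤ) : ℝ) = ((J:ℝ) ^ 3 - J) / 3 := by
  rw [← tsum_natJ, ← (Equiv.neg ℤ).tsum_eq]
  congr 1; ext n
  have : (Equiv.neg ℤ n) * (Equiv.neg ℤ n + -J) = n * (n + J) := by
    simp only [Equiv.neg_apply]; ring
  rw [this]

def pairEquiv : ℤ ≃ {j : Fin (2 * 1) → ℤ // ∑ i, j i = 0} where
  toFun j := ⟨![j, -j], by simp⟩
  invFun j := j.1 0
  left_inv j := by simp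
  right_inv j := by
    obtain ⟨j, hj⟩ := j
    ext i
    have : j 0 + j 1 = 0 := by simpa [Fin.sum_univ_two] using hj
    fin_cases i
    · rfl
    · show -j 0 = j 1
      omega

lemma prodPoly_two (j n : ℤ) : prodPoly (2 * 1) ![j, -j] n = n * (n + j) := by
  unfold prodPoly
  have h0 : Finset.Iio (0 : Fin 2) = ∅ := by decide
  have h1 : Finset.Iio (1 : Fin 2) = {0} := by decide
  show ∏ i : Fin 2, (n + ∑ l ∈ Finset.Iio i, (![j, -j] : Fin 2 → ℤ) l) = _
  rw [Fin.prod_univ_two, h0, h1]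
  simp

lemma zetaTerm_eq (a : ℝ → ℝ) (j : ℤ) :
    zetaTerm 1 a (pairEquiv j) =
      (((|(j:ℝ)| ^ 3 - |(j:ℝ)|) / 3 * ‖fCoef (fun θ => (a θ : ℂ)) j‖ ^ 2 : ℝ) : ℂ) := by
  have hN : Ncoef (2 * 1) ![j, -j] = (|(j:ℝ)| ^ 3 - |(j:ℝ)|) / 3 := by
    unfold Ncoef
    simp only [prodPoly_two]
    obtain ⟨J, rfl | rfl⟩ := j.eq_nat_or_neg
    · rw [tsum_natJ]; simp
    · rw [tsum_negJ]; simp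
  have hP : ∏ i : Fin (2 * 1), fCoef (fun θ => (a θ : ℂ)) ((![j, -j] : Fin 2 → ℤ) i)
      = ((‖fCoef (fun θ => (a θ : ℂ)) j‖ ^ 2 : ℝ) : ℂ) := by
    show ∏ i : Fin 2, fCoef (fun θ => (a θ : ℂ)) ((![j, -j] : Fin 2 → ℤ) i) = _
    rw [Fin.prod_univ_two]
    simp only [Matrix.cons_val_zero, Matrix.cons_val_one]
    rw [fCoef_neg, Complex.mul_conj, Complex.normSq_eq_norm_sq]
  show (Ncoef (2 * 1) ![j, -j] : ℂ) *
    ∏ i : Fin (2 * 1), fCoef (fun θ => (a θ : ℂ)) ((![j, -j] : Fin 2 → ℤ) i) = _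
  rw [hN, hP]; push_cast; ring

/-- **Edward's formula (3.4) of the paper.** For a smooth `2π`-periodic real-valued `a`,
`Z₁(a) = (2/3) ∑_{n≥2} (n³ - n) |â(n)|²`, the series on the right converging. -/
theorem zetaInv_one_formula
    (a : ℝ → ℝ) (ha : ContDiff ℝ (⊤ : ℕ∞) a) (haper : Function.Periodic a (2 * Real.pi)) :
    Summable (fun n : ℕ =>
      (((n : ℝ) + 2) ^ 3 - ((n : ℝ) + 2)) *
        ‖fCoef (fun θ => (a θ : ℂ)) ((n : ℤ) + 2)‖ ^ 2) ∧
    ZetaInv 1 a =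
      (((2 / 3 : ℝ) * ∑' n : ℕ,
        (((n : ℝ) + 2) ^ 3 - ((n : ℝ) + 2)) *
          ‖fCoef (fun θ => (a θ : ℂ)) ((n : ℤ) + 2)‖ ^ 2 : ℝ) : ℂ) := by
  have hs : Summable (fun n : ℕ =>
      (((n : ℝ) + 2) ^ 3 - ((n : ℝ) + 2)) *
        ‖fCoef (fun θ => (a θ : ℂ)) ((n : ℤ) + 2)‖ ^ 2) := by
    obtain ⟨C, hC⟩ := fCoef_decay 3 (fun θ => (a θ : ℂ))
      (Complex.ofRealCLM.contDiff.comp ha) (fun x => by simp only [haper x])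
    have hs0 : Summable (fun n : ℕ => C ^ 2 * (1 / ((n + 2 : ℕ) : ℝ) ^ 3)) :=
      ((summable_nat_add_iff 2).2
        (Real.summable_one_div_nat_pow.2 (by norm_num : 1 < 3))).mul_left _
    refine Summable.of_nonneg_of_le (fun n => ?_) (fun n => ?_) hs0
    · have h : (0:ℝ) ≤ ((n : ℝ) + 2) ^ 3 - ((n : ℝ) + 2) := by
        have : (0:ℝ) ≤ n := n.cast_nonneg
        have : (0:ℝ) ≤ ((n:ℝ) + 2) * ((n + 1) * (n + 3)) := by positivity
        nlinarith
      positivity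
    · have h := hC ((n:ℤ) + 2)
      push_cast at h
      push_cast
      set x : ℝ := (n:ℝ) + 2 with hx
      have hx0 : 0 < x := by positivity
      set c := ‖fCoef (fun θ => (a θ : ℂ)) ((n : ℤ) + 2)‖
      rw [abs_of_pos hx0] at h
      have h2 : (x ^ 3 * c) ^ 2 ≤ C ^ 2 := by
        apply pow_le_pow_left₀ (by positivity) h
      rw [mul_one_div, le_div_iff₀ (by positivity)]
      have : 0 ≤ x * (c ^ 2 * x ^ 3) := by positivity
      nlinarith
  refine ⟨hs, ?_⟩
  set g : ℤ → ℝ := fun j => (|(j:ℝ)| ^ 3 - |(j:ℝ)|) / 3 * ‖fCoef (fun θ => (a θ : ℂ)) j‖ ^ 2 with hg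
  have hZ : ZetaInv 1 a = ((∑' j : ℤ, g j : ℝ) : ℂ) := by
    unfold ZetaInv
    rw [← pairEquiv.tsum_eq, Complex.ofReal_tsum]
    exact tsum_congr (zetaTerm_eq a)
  rw [hZ]
  congr 1
  have hneg : ∀ j, g (-j) = g j := by
    intro j
    simp only [hg, fCoef_neg, RCLike.norm_conj, Int.cast_neg, abs_neg]
  have h1 : HasSum (fun n : ℕ => g ((n:ℤ) + 1)) (1 / 3 * ∑' n : ℕ,
        (((n : ℝ) + 2) ^ 3 - ((n : ℝ) + 2)) *
          ‖fCoef (fun θ => (a θ : ℂ)) ((n : ℤ) + 2)‖ ^ 2) := by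
    have hf : ∀ n : ℕ, g (((n + 1 : ℕ) : ℤ) + 1) = 1 / 3 * ((((n : ℝ) + 2) ^ 3 - ((n : ℝ) + 2)) *
          ‖fCoef (fun θ => (a θ : ℂ)) ((n : ℤ) + 2)‖ ^ 2) := by
      intro n
      have : ((n + 1 : ℕ) : ℤ) + 1 = (n:ℤ) + 2 := by push_cast; ring
      rw [this]
      simp only [hg]
      push_cast
      rw [abs_of_pos (by positivity : (0:ℝ) < (n:ℝ) + 2)]
      ring
    have hz : ∑ i ∈ Finset.range 1, g ((i:ℤ) + 1) = 0 := by simp [hg]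
    rw [← hasSum_nat_add_iff' 1, hz, sub_zero]
    simp only [hf]
    exact hs.hasSum.mul_left (1 / 3)
  have h2 : HasSum (fun n : ℕ => g (-((n:ℤ) + 1))) (1 / 3 * ∑' n : ℕ,
        (((n : ℝ) + 2) ^ 3 - ((n : ℝ) + 2)) *
          ‖fCoef (fun θ => (a θ : ℂ)) ((n : ℤ) + 2)‖ ^ 2) := by
    simp only [hneg]; exact h1
  rw [(HasSum.of_add_one_of_neg_add_one h1 h2).tsum_eq]
  have h0 : g 0 = 0 := by simp [hg]
  rw [h0]; ring
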